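/- Let f : ℝ^d → ℝ be twice continuously differentiable and suppose there exists C > 0 such that ‖∇²f(x)‖₂ ≤ C(1 + ‖∇f(x)‖) for all x. Fix β > 0 and let μ be the measure on ℝ^d × ℝ^d with density exp(−(2f(x)+‖v‖²)/β), assumed finite. Then for every h ∈ C_c^∞(ℝ^d × ℝ^d): ∫∫ ‖∇²f(x) · ∇_v h(x,v)‖² dμ ≤ κ₂ ( ∫∫ ‖∇_x∇_v h(x,v)‖_F² dμ + ∫∫ ‖∇_v h(x,v)‖² dμ ), where ‖·‖_F is the Frobenius norm of the mixed second derivative matrix (∂²h/∂x_i∂v_j)_{ij}, κ₂ = 2C²(1+κ₁) and κ₁ = max{ 2dCβ + 2d²C²β², 2β² }. -/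

import Mathlib

open MeasureTheory

/-!
Write `W = e^{-(2f+‖v‖²)/β}`, so that `∇ₓW = -(2/β) W ∇f`. For a compactly supported `C¹` function
`g`, the field `g² W ∇f` has `x`-divergence `(2 g ⟨∇ₓg, ∇f⟩ + g² Δf - (2/β) g² ‖∇f‖²) W`, whose
integral vanishes. Since `Δf ≤ d ‖∇²f‖ ≤ d C (1 + ‖∇f‖)`, Young's inequality absorbs the factors
`‖∇f‖` in the first two terms into the third, which gives the relative bound
`∫ ‖∇f‖² g² W ≤ κ₁ (∫ ‖∇ₓg‖² W + ∫ g² W)` (`relative_bound`).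

The commutator estimate follows by taking `g = ∂h/∂vⱼ`, summing over `j`, and using
`‖∇²f · w‖² ≤ C² (1 + ‖∇f‖)² ‖w‖² ≤ 2 C² (1 + ‖∇f‖²) ‖w‖²`.
-/

/-- The (unnormalised) density `exp (-(2 f(x) + ‖v‖²) / β)` of the Gibbs measure. -/
noncomputable def gibbsWeight {d : ℕ} (f : EuclideanSpace ℝ (Fin d) → ℝ) (β : ℝ)
    (p : EuclideanSpace ℝ (Fin d) × EuclideanSpace ℝ (Fin d)) : ℝ :=
  Real.exp (-(2 * f p.1 + ‖p.2‖ ^ 2) / β)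

section
variable {d : ℕ}

theorem gradient_apply_eq (f : EuclideanSpace ℝ (Fin d) → ℝ) (x : EuclideanSpace ℝ (Fin d))
    (i : Fin d) : gradient f x i = fderiv ℝ f x (EuclideanSpace.single i 1) := by
  rw [← toDual_gradient, InnerProductSpace.toDual_apply_apply, EuclideanSpace.inner_single_right]
  simp

theorem contDiff_gradient {f : EuclideanSpace ℝ (Fin d) → ℝ} (hf : ContDiff ℝ 2 f) :
    ContDiff ℝ 1 (gradient f) := by
  have h1 : ContDiff ℝ 1 (fderiv ℝ f) := hf.fderiv_right (by norm_num)
  exact (InnerProductSpace.toDual ℝ (EuclideanSpace ℝ (Fin d))).symm.contDiff.comp h1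

theorem gradient_right_apply
    {h : EuclideanSpace ℝ (Fin d) × EuclideanSpace ℝ (Fin d) → ℝ} (hh : Differentiable ℝ h)
    (p : EuclideanSpace ℝ (Fin d) × EuclideanSpace ℝ (Fin d)) (j : Fin d) :
    gradient (fun v => h (p.1, v)) p.2 j = fderiv ℝ h p (0, EuclideanSpace.single j 1) := by
  rw [gradient_apply_eq]
  have h1 : HasFDerivAt (fun v => h (p.1, v)) _ p.2 :=
    HasFDerivAt.comp p.2 (hh (p.1, p.2)).hasFDerivAt (hasFDerivAt_prodMk_right p.1 p.2)
  rw [h1.fderiv]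
  simp

theorem gradient_left_apply
    {h : EuclideanSpace ℝ (Fin d) × EuclideanSpace ℝ (Fin d) → ℝ} (hh : Differentiable ℝ h)
    (p : EuclideanSpace ℝ (Fin d) × EuclideanSpace ℝ (Fin d)) (j : Fin d) :
    gradient (fun x => h (x, p.2)) p.1 j = fderiv ℝ h p (EuclideanSpace.single j 1, 0) := by
  rw [gradient_apply_eq]
  have h1 : HasFDerivAt (fun x => h (x, p.2)) _ p.1 :=
    HasFDerivAt.comp p.1 (hh (p.1, p.2)).hasFDerivAt (hasFDerivAt_prodMk_left p.1 p.2)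
  rw [h1.fderiv]
  simp

theorem contDiff_gibbsWeight {f : EuclideanSpace ℝ (Fin d) → ℝ} (hf : ContDiff ℝ 2 f) (β : ℝ) :
    ContDiff ℝ 1 (gibbsWeight f β) := by
  have hf1 : ContDiff ℝ 1 f := hf.of_le (by norm_num)
  unfold gibbsWeight
  refine Real.contDiff_exp.comp ?_
  refine ContDiff.div_const (ContDiff.neg (ContDiff.add ?_ ?_)) _
  · exact contDiff_const.mul (hf1.comp contDiff_fst)
  · exact contDiff_snd.norm_sq ℝ

theorem fderiv_gibbsWeight {f : EuclideanSpace ℝ (Fin d) → ℝ} (hf : ContDiff ℝ 2 f) (β : ℝ)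
    (p : EuclideanSpace ℝ (Fin d) × EuclideanSpace ℝ (Fin d)) (i : Fin d) :
    fderiv ℝ (gibbsWeight f β) p (EuclideanSpace.single i 1, 0) =
      -(2 / β) * gradient f p.1 i * gibbsWeight f β p := by
  have hW : Differentiable ℝ (gibbsWeight f β) :=
    (contDiff_gibbsWeight hf β).differentiable (by norm_num)
  rw [← gradient_left_apply hW, gradient_apply_eq, gradient_apply_eq]
  have hf1 : DifferentiableAt ℝ f p.1 := hf.differentiable (by norm_num) _
  have h1 : HasFDerivAt (fun x => gibbsWeight f β (x, p.2)) _ p.1 :=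
    ((((hf1.hasFDerivAt.const_mul 2).add_const (‖p.2‖ ^ 2)).neg).mul_const β⁻¹).exp
  rw [h1.fderiv]
  simp [gibbsWeight, div_eq_mul_inv]
  ring

/-- Integration by parts against the constant function `1`. -/
theorem integral_fderiv_eq_zero_of_hasCompactSupport
    {F : EuclideanSpace ℝ (Fin d) × EuclideanSpace ℝ (Fin d) → ℝ} (hF : ContDiff ℝ 1 F)
    (hs : HasCompactSupport F) (u : EuclideanSpace ℝ (Fin d) × EuclideanSpace ℝ (Fin d)) :
    Integrable (fun p => fderiv ℝ F p u) ∧ ∫ p, fderiv ℝ F p u = 0 := by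
  have hint : Integrable (fun p => fderiv ℝ F p u) :=
    ((hF.continuous_fderiv (by norm_num)).clm_apply
      continuous_const).integrable_of_hasCompactSupport (hs.fderiv_apply ℝ u)
  refine ⟨hint, ?_⟩
  have : (volume : Measure (EuclideanSpace ℝ (Fin d) ×
      EuclideanSpace ℝ (Fin d))).IsAddHaarMeasure :=
    Measure.prod.instIsAddHaarMeasure volume volume
  have := integral_mul_fderiv_eq_neg_fderiv_mul_of_integrable (𝕜 := ℝ)
    (μ := (volume : Measure (EuclideanSpace ℝ (Fin d) × EuclideanSpace ℝ (Fin d))))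
    (f := fun _ => (1 : ℝ)) (g := F) (v := u) (by simp) (by simpa using hint)
    (by simpa using hF.continuous.integrable_of_hasCompactSupport hs)
    (fun _ _ => differentiableAt_const _) (fun x _ => hF.differentiable (by norm_num) x)
  simpa using this

/-- The trace of an operator on `ℝᵈ` is at most `d` times its operator norm; applied to the Hessian
of `f`, it bounds the Laplacian. -/
theorem trace_le (T : EuclideanSpace ℝ (Fin d) →L[ℝ] EuclideanSpace ℝ (Fin d)) :
    ∑ i, T (EuclideanSpace.single i 1) i ≤ d * ‖T‖ := by
  have : ∀ i ∈ Finset.univ, T (EuclideanSpace.single i 1) i ≤ ‖T‖ := fun i _ => by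
    calc T (EuclideanSpace.single i 1) i ≤ ‖T (EuclideanSpace.single i 1) i‖ := le_abs_self _
      _ ≤ ‖T (EuclideanSpace.single i 1)‖ := PiLp.norm_apply_le _ _
      _ ≤ ‖T‖ * ‖(EuclideanSpace.single i 1 : EuclideanSpace ℝ (Fin d))‖ := T.le_opNorm _
      _ = ‖T‖ := by simp
  simpa using Finset.sum_le_sum this

/-- The `i`-th term of the `x`-divergence of the flux `g² ∇f e^{-(2f+‖v‖²)/β}`. -/
theorem fderiv_flux {f : EuclideanSpace ℝ (Fin d) → ℝ} (hf : ContDiff ℝ 2 f) (β : ℝ)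
    {g : EuclideanSpace ℝ (Fin d) × EuclideanSpace ℝ (Fin d) → ℝ} (hg : ContDiff ℝ 1 g)
    (p : EuclideanSpace ℝ (Fin d) × EuclideanSpace ℝ (Fin d)) (i : Fin d) :
    fderiv ℝ (fun p => g p ^ 2 * gradient f p.1 i * gibbsWeight f β p) p
        (EuclideanSpace.single i 1, 0) =
      (2 * g p * (gradient (fun x => g (x, p.2)) p.1 i * gradient f p.1 i)
        + g p ^ 2 * fderiv ℝ (gradient f) p.1 (EuclideanSpace.single i 1) i
        - 2 / β * g p ^ 2 * gradient f p.1 i ^ 2) * gibbsWeight f β p := by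
  have hgd : Differentiable ℝ g := hg.differentiable (by norm_num)
  have hW : Differentiable ℝ (gibbsWeight f β) :=
    (contDiff_gibbsWeight hf β).differentiable (by norm_num)
  have hG : DifferentiableAt ℝ (gradient f) p.1 :=
    (contDiff_gradient hf).differentiable (by norm_num) _
  have hGi : HasFDerivAt (fun q : EuclideanSpace ℝ (Fin d) × EuclideanSpace ℝ (Fin d) =>
      gradient f q.1 i) ((EuclideanSpace.proj i).comp ((fderiv ℝ (gradient f) p.1).comp
        (ContinuousLinearMap.fst ℝ _ _))) p :=
    (EuclideanSpace.proj (𝕜 := ℝ) i).hasFDerivAt.comp p (hG.hasFDerivAt.comp p hasFDerivAt_fst)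
  have key := (((hgd p).hasFDerivAt.pow 2).mul hGi).mul (hW p).hasFDerivAt
  have key' : HasFDerivAt (fun p => g p ^ 2 * gradient f p.1 i * gibbsWeight f β p) _ p := key
  rw [key'.fderiv, gradient_left_apply hgd]
  simp [fderiv_gibbsWeight hf]
  ring

theorem continuous_gradient_left
    {g : EuclideanSpace ℝ (Fin d) × EuclideanSpace ℝ (Fin d) → ℝ} (hg : ContDiff ℝ 1 g) :
    Continuous (fun p : EuclideanSpace ℝ (Fin d) × EuclideanSpace ℝ (Fin d) =>
      ‖gradient (fun x => g (x, p.2)) p.1‖ ^ 2) := by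
  have hgd : Differentiable ℝ g := hg.differentiable (by norm_num)
  simp only [EuclideanSpace.norm_sq_eq, gradient_left_apply hgd]
  have := hg.continuous_fderiv (by norm_num)
  fun_prop

theorem integrable_gradient_left {f : EuclideanSpace ℝ (Fin d) → ℝ} (hf : ContDiff ℝ 2 f) (β : ℝ)
    {g : EuclideanSpace ℝ (Fin d) × EuclideanSpace ℝ (Fin d) → ℝ} (hg : ContDiff ℝ 1 g)
    (hs : HasCompactSupport g) :
    Integrable (fun p : EuclideanSpace ℝ (Fin d) × EuclideanSpace ℝ (Fin d) =>
      ‖gradient (fun x => g (x, p.2)) p.1‖ ^ 2 * gibbsWeight f β p) := by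
  have hgd : Differentiable ℝ g := hg.differentiable (by norm_num)
  refine ((continuous_gradient_left hg).mul
    (contDiff_gibbsWeight hf β).continuous).integrable_of_hasCompactSupport ?_
  refine HasCompactSupport.mul_right ((hs.fderiv ℝ).mono fun p hp => ?_)
  simp only [EuclideanSpace.norm_sq_eq, gradient_left_apply hgd, Function.mem_support] at hp ⊢
  intro h0
  simp [h0] at hp

theorem integrable_mul_gibbsWeight {f : EuclideanSpace ℝ (Fin d) → ℝ} (hf : ContDiff ℝ 2 f)
    (β : ℝ) {g k : EuclideanSpace ℝ (Fin d) × EuclideanSpace ℝ (Fin d) → ℝ} (hg : Continuous g)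
    (hs : HasCompactSupport g) (hk : Continuous k) :
    Integrable (fun p => k p * g p ^ 2 * gibbsWeight f β p) := by
  refine ((hk.mul (hg.pow 2)).mul
    (contDiff_gibbsWeight hf β).continuous).integrable_of_hasCompactSupport ?_
  refine HasCompactSupport.mul_right (HasCompactSupport.mul_left (hs.mono fun p hp => ?_))
  simpa using hp

/-- The scalar estimate behind the relative bound, read with `a = ‖∇f‖`, `b = ‖∇ₓg‖`, `t = g`,
`s = ⟨∇ₓg, ∇f⟩` and `L = Δf`; the factor multiplying `-β` is the divergence of
`g² ∇f e^{-(2f+‖v‖²)/β}` divided by the weight. -/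
theorem scalar_estimate {a b s L C β t D : ℝ} (hβ : 0 < β) (hC : 0 < C) (hD : 0 ≤ D)
    (hs : |s| ≤ b * a) (hL : L ≤ D * (C * (1 + a))) :
    a ^ 2 * t ^ 2 ≤ max (2 * D * C * β + 2 * D ^ 2 * C ^ 2 * β ^ 2) (2 * β ^ 2) *
      (b ^ 2 + t ^ 2) - β * (2 * t * s + t ^ 2 * L - 2 / β * t ^ 2 * a ^ 2) := by
  set κ := max (2 * D * C * β + 2 * D ^ 2 * C ^ 2 * β ^ 2) (2 * β ^ 2) with hκ
  have h1 : 2 * D * C * β + 2 * D ^ 2 * C ^ 2 * β ^ 2 ≤ κ := le_max_left _ _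
  have h2 : 2 * β ^ 2 ≤ κ := le_max_right _ _
  have hts : t * s ≤ |t| * (b * a) := by
    calc t * s ≤ |t * s| := le_abs_self _
      _ = |t| * |s| := abs_mul _ _
      _ ≤ |t| * (b * a) := by gcongr
  -- Young's inequality with weights that each leave `a² t² / 2`.
  have h3 : 2 * β * (t * s) ≤ a ^ 2 * t ^ 2 / 2 + 2 * β ^ 2 * b ^ 2 := by
    have h31 : 2 * β * (t * s) ≤ 2 * β * (|t| * (b * a)) := by gcongr
    nlinarith [sq_nonneg (|t| * a - 2 * β * b), sq_abs t]
  have h4 : β * t ^ 2 * L ≤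
      a ^ 2 * t ^ 2 / 2 + (D * C * β + D ^ 2 * C ^ 2 * β ^ 2 / 2) * t ^ 2 := by
    have h41 : β * t ^ 2 * L ≤ β * t ^ 2 * (D * (C * (1 + a))) := by gcongr
    nlinarith [sq_nonneg (t * (a - β * D * C))]
  have h5 : 2 * β ^ 2 * b ^ 2 ≤ κ * b ^ 2 := by gcongr
  have h6 : (D * C * β + D ^ 2 * C ^ 2 * β ^ 2 / 2) * t ^ 2 ≤ κ * t ^ 2 := by
    have h61 : 0 ≤ D * C * β := by positivity
    have h62 : 0 ≤ D ^ 2 * C ^ 2 * β ^ 2 := by positivity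
    gcongr
    linarith
  have h7 : β * (2 * t * s + t ^ 2 * L - 2 / β * t ^ 2 * a ^ 2) =
      2 * β * (t * s) + β * t ^ 2 * L - 2 * (a ^ 2 * t ^ 2) := by
    field_simp
  rw [h7]
  linarith

/-- `‖∇f‖` as a multiplication operator is bounded relative to `∇ₓ` in `L²` of the Gibbs measure:
integrate `scalar_estimate` and use that the flux `g² ∇f e^{-(2f+‖v‖²)/β}` has divergence of
integral zero. -/
theorem relative_bound {f : EuclideanSpace ℝ (Fin d) → ℝ} (hf : ContDiff ℝ 2 f) {C : ℝ}
    (hC : 0 < C) (hvillani : ∀ x, ‖fderiv ℝ (gradient f) x‖ ≤ C * (1 + ‖gradient f x‖))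
    {β : ℝ} (hβ : 0 < β)
    {g : EuclideanSpace ℝ (Fin d) × EuclideanSpace ℝ (Fin d) → ℝ} (hg : ContDiff ℝ 1 g)
    (hs : HasCompactSupport g) :
    ∫ p, ‖gradient f p.1‖ ^ 2 * g p ^ 2 * gibbsWeight f β p ≤
      max (2 * (d : ℝ) * C * β + 2 * (d : ℝ) ^ 2 * C ^ 2 * β ^ 2) (2 * β ^ 2) *
        ((∫ p, ‖gradient (fun x => g (x, p.2)) p.1‖ ^ 2 * gibbsWeight f β p) +
          ∫ p, g p ^ 2 * gibbsWeight f β p) := by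
  set κ := max (2 * (d : ℝ) * C * β + 2 * (d : ℝ) ^ 2 * C ^ 2 * β ^ 2) (2 * β ^ 2) with hκ
  have hG := contDiff_gradient hf
  let F : Fin d → EuclideanSpace ℝ (Fin d) × EuclideanSpace ℝ (Fin d) → ℝ :=
    fun i p => g p ^ 2 * gradient f p.1 i * gibbsWeight f β p
  have hF : ∀ i, ContDiff ℝ 1 (F i) := fun i => by
    refine ((hg.pow 2).mul ?_).mul (contDiff_gibbsWeight hf β)
    exact (EuclideanSpace.proj (𝕜 := ℝ) i).contDiff.comp (hG.comp contDiff_fst)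
  have hFs : ∀ i, HasCompactSupport (F i) := fun i => by
    refine HasCompactSupport.mul_right (HasCompactSupport.mul_right (hs.mono fun p hp => ?_))
    simpa using hp
  have hdiv := fun i => integral_fderiv_eq_zero_of_hasCompactSupport (hF i) (hFs i)
    (EuclideanSpace.single i 1, 0)
  have hdivI : Integrable (fun p => ∑ i, fderiv ℝ (F i) p (EuclideanSpace.single i 1, 0)) :=
    integrable_finsetSum _ fun i _ => (hdiv i).1
  have hdiv0 : ∫ p, ∑ i, fderiv ℝ (F i) p (EuclideanSpace.single i 1, 0) = 0 := by
    rw [integral_finsetSum _ fun i _ => (hdiv i).1]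
    exact Finset.sum_eq_zero fun i _ => (hdiv i).2
  have hI1 := integrable_gradient_left hf β hg hs
  have hI2 : Integrable (fun p => g p ^ 2 * gibbsWeight f β p) := by
    simpa using integrable_mul_gibbsWeight hf β hg.continuous hs (k := fun _ => 1)
      continuous_const
  have hI3 : Integrable (fun p => ‖gradient f p.1‖ ^ 2 * g p ^ 2 * gibbsWeight f β p) :=
    integrable_mul_gibbsWeight hf β hg.continuous hs
      (k := fun p => ‖gradient f p.1‖ ^ 2) ((hG.continuous.comp continuous_fst).norm.pow 2)
  have hmono : ∫ p, ‖gradient f p.1‖ ^ 2 * g p ^ 2 * gibbsWeight f β p ≤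
      ∫ p, (κ * (‖gradient (fun x => g (x, p.2)) p.1‖ ^ 2 * gibbsWeight f β p
        + g p ^ 2 * gibbsWeight f β p)
        - β * ∑ i, fderiv ℝ (F i) p (EuclideanSpace.single i 1, 0)) := by
    refine integral_mono hI3 (((hI1.fun_add hI2).const_mul κ).sub (hdivI.const_mul β)) fun p => ?_
    have hsum : ∑ i, fderiv ℝ (F i) p (EuclideanSpace.single i 1, 0) =
        (2 * g p * inner ℝ (gradient (fun x => g (x, p.2)) p.1) (gradient f p.1)
          + g p ^ 2 * ∑ i, fderiv ℝ (gradient f) p.1 (EuclideanSpace.single i 1) i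
          - 2 / β * g p ^ 2 * ‖gradient f p.1‖ ^ 2) * gibbsWeight f β p := by
      simp only [F, fderiv_flux hf β hg, ← Finset.sum_mul, Finset.sum_add_distrib,
        Finset.sum_sub_distrib, ← Finset.mul_sum, EuclideanSpace.real_norm_sq_eq]
      simp only [PiLp.inner_apply, RCLike.inner_apply, conj_trivial]
      simp only [mul_comm (gradient f p.1 _)]
    have hL : ∑ i, fderiv ℝ (gradient f) p.1 (EuclideanSpace.single i 1) i ≤
        d * (C * (1 + ‖gradient f p.1‖)) :=
      (trace_le _).trans (mul_le_mul_of_nonneg_left (hvillani _) (Nat.cast_nonneg _))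
    have hest := scalar_estimate (t := g p) hβ hC (Nat.cast_nonneg d)
      (abs_real_inner_le_norm (gradient (fun x => g (x, p.2)) p.1) (gradient f p.1)) hL
    have hW : 0 ≤ gibbsWeight f β p := (Real.exp_pos _).le
    have := mul_le_mul_of_nonneg_right hest hW
    simp only [hsum]
    refine this.trans (le_of_eq ?_)
    ring
  refine hmono.trans (le_of_eq ?_)
  rw [integral_sub ((hI1.fun_add hI2).const_mul κ) (hdivI.const_mul β), integral_const_mul,
    integral_const_mul, hdiv0, integral_add hI1 hI2]
  ring

end

/-- Key commutator estimate of Section 4.2.2: under the Villani condition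
`‖∇²f(x)‖₂ ≤ C(1 + ‖∇f(x)‖)`, for every smooth compactly supported
`h : ℝᵈ × ℝᵈ → ℝ`,
`∫∫ ‖∇²f(x) · ∇_v h‖² dμ ≤ κ₂ (∫∫ ‖∇_x ∇_v h‖_F² dμ + ∫∫ ‖∇_v h‖² dμ)`,
where `dμ = e^{-(2f(x)+‖v‖²)/β} dv dx`, `κ₂ = 2C²(1+κ₁)` and
`κ₁ = max (2dCβ + 2d²C²β²) (2β²)`.  The Frobenius norm term is written as
`∑ⱼ ‖∇_x (∂h/∂vⱼ)‖²`. -/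
theorem relative_bound_commutator {d : ℕ} (f : EuclideanSpace ℝ (Fin d) → ℝ)
    (hf : ContDiff ℝ 2 f) (C : ℝ) (hC : 0 < C)
    (hvillani : ∀ x, ‖fderiv ℝ (gradient f) x‖ ≤ C * (1 + ‖gradient f x‖))
    (β : ℝ) (hβ : 0 < β)
    (hμ_fin : Integrable (fun p : EuclideanSpace ℝ (Fin d) × EuclideanSpace ℝ (Fin d) =>
      Real.exp (-(2 * f p.1 + ‖p.2‖ ^ 2) / β)))
    (h : EuclideanSpace ℝ (Fin d) × EuclideanSpace ℝ (Fin d) → ℝ)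
    (hh : ContDiff ℝ (⊤ : ℕ∞) h) (hh_supp : HasCompactSupport h) :
    ∫ p : EuclideanSpace ℝ (Fin d) × EuclideanSpace ℝ (Fin d),
        ‖fderiv ℝ (gradient f) p.1 (gradient (fun v => h (p.1, v)) p.2)‖ ^ 2 *
          Real.exp (-(2 * f p.1 + ‖p.2‖ ^ 2) / β) ≤
      2 * C ^ 2 *
          (1 + max (2 * (d : ℝ) * C * β + 2 * (d : ℝ) ^ 2 * C ^ 2 * β ^ 2) (2 * β ^ 2)) *
        ((∫ p : EuclideanSpace ℝ (Fin d) × EuclideanSpace ℝ (Fin d),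
            (∑ j : Fin d,
              ‖gradient (fun x => gradient (fun v => h (x, v)) p.2 j) p.1‖ ^ 2) *
              Real.exp (-(2 * f p.1 + ‖p.2‖ ^ 2) / β)) +
          ∫ p : EuclideanSpace ℝ (Fin d) × EuclideanSpace ℝ (Fin d),
            ‖gradient (fun v => h (p.1, v)) p.2‖ ^ 2 *
              Real.exp (-(2 * f p.1 + ‖p.2‖ ^ 2) / β)) := by
  set κ := max (2 * (d : ℝ) * C * β + 2 * (d : ℝ) ^ 2 * C ^ 2 * β ^ 2) (2 * β ^ 2) with hκ
  have hκ0 : 0 ≤ κ := le_trans (by positivity) (le_max_right _ _)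
  have hhd : Differentiable ℝ h := hh.differentiable (by simp)
  have hG := contDiff_gradient hf
  let g : Fin d → EuclideanSpace ℝ (Fin d) × EuclideanSpace ℝ (Fin d) → ℝ :=
    fun j p => fderiv ℝ h p (0, EuclideanSpace.single j 1)
  have hgrad : ∀ (x v : EuclideanSpace ℝ (Fin d)) (j : Fin d),
      gradient (fun v => h (x, v)) v j = g j (x, v) :=
    fun x v j => gradient_right_apply hhd (x, v) j
  have hg : ∀ j, ContDiff ℝ 1 (g j) := fun j => by
    have h1 : ContDiff ℝ 1 (fderiv ℝ h) := 
      (contDiff_infty.1 hh 2).fderiv_right (by norm_num)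
    exact h1.clm_apply contDiff_const
  have hgs : ∀ j, HasCompactSupport (g j) := fun j => hh_supp.fderiv_apply ℝ _
  have hnorm : ∀ p : EuclideanSpace ℝ (Fin d) × EuclideanSpace ℝ (Fin d),
      ‖gradient (fun v => h (p.1, v)) p.2‖ ^ 2 = ∑ j, g j p ^ 2 := fun p => by
    simp only [EuclideanSpace.real_norm_sq_eq, hgrad]
  change ∫ p : EuclideanSpace ℝ (Fin d) × EuclideanSpace ℝ (Fin d), _ * gibbsWeight f β p ≤
    2 * C ^ 2 * (1 + κ) * ((∫ p : EuclideanSpace ℝ (Fin d) × EuclideanSpace ℝ (Fin d),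
      _ * gibbsWeight f β p) + ∫ p : EuclideanSpace ℝ (Fin d) × EuclideanSpace ℝ (Fin d),
      _ * gibbsWeight f β p)
  simp only [hgrad, hnorm, Finset.sum_mul]
  have hI1 := fun j => integrable_gradient_left hf β (hg j) (hgs j)
  have hI2 : ∀ j, Integrable (fun p => g j p ^ 2 * gibbsWeight f β p) := fun j => by
    simpa using integrable_mul_gibbsWeight hf β (hg j).continuous (hgs j) (k := fun _ => 1)
      continuous_const
  have hI3 : ∀ j, Integrable (fun p => ‖gradient f p.1‖ ^ 2 * g j p ^ 2 * gibbsWeight f β p) :=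
    fun j => integrable_mul_gibbsWeight hf β (hg j).continuous (hgs j)
      (k := fun p => ‖gradient f p.1‖ ^ 2) ((hG.continuous.comp continuous_fst).norm.pow 2)
  rw [integral_finsetSum _ fun j _ => hI1 j, integral_finsetSum _ fun j _ => hI2 j]
  have hmono : ∫ p : EuclideanSpace ℝ (Fin d) × EuclideanSpace ℝ (Fin d),
      ‖fderiv ℝ (gradient f) p.1 (gradient (fun v => h (p.1, v)) p.2)‖ ^ 2 * gibbsWeight f β p ≤
      ∫ p, 2 * C ^ 2 * ∑ j, (g j p ^ 2 * gibbsWeight f β p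
        + ‖gradient f p.1‖ ^ 2 * g j p ^ 2 * gibbsWeight f β p) := by
    refine integral_mono_of_nonneg
      (Filter.Eventually.of_forall fun p => mul_nonneg (sq_nonneg _) (Real.exp_pos _).le)
      ((integrable_finsetSum _ fun j _ => (hI2 j).fun_add (hI3 j)).const_mul _)
      (Filter.Eventually.of_forall fun p => ?_)
    have hW : 0 ≤ gibbsWeight f β p := (Real.exp_pos _).le
    have hop : ‖fderiv ℝ (gradient f) p.1 (gradient (fun v => h (p.1, v)) p.2)‖ ≤
        C * (1 + ‖gradient f p.1‖) * ‖gradient (fun v => h (p.1, v)) p.2‖ :=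
      (ContinuousLinearMap.le_opNorm _ _).trans
        (mul_le_mul_of_nonneg_right (hvillani _) (norm_nonneg _))
    have hsq := pow_le_pow_left₀ (norm_nonneg _) hop 2
    rw [mul_pow, hnorm] at hsq
    have hyoung : (C * (1 + ‖gradient f p.1‖)) ^ 2 ≤
        2 * C ^ 2 * (1 + ‖gradient f p.1‖ ^ 2) := by
      nlinarith [mul_nonneg (sq_nonneg C) (sq_nonneg (1 - ‖gradient f p.1‖))]
    have hS : 0 ≤ ∑ j, g j p ^ 2 := Finset.sum_nonneg fun j _ => sq_nonneg _
    have := mul_le_mul_of_nonneg_right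
      (hsq.trans (mul_le_mul_of_nonneg_right hyoung hS)) hW
    refine this.trans (le_of_eq ?_)
    simp only [Finset.sum_add_distrib, ← Finset.sum_mul, ← Finset.mul_sum]
    ring
  refine hmono.trans ?_
  rw [integral_const_mul, integral_finsetSum _ fun j _ => (hI2 j).fun_add (hI3 j)]
  simp only [fun j => integral_add (hI2 j) (hI3 j)]
  have hB := Finset.sum_le_sum fun j (_ : j ∈ Finset.univ) =>
    relative_bound hf hC hvillani hβ (hg j) (hgs j)
  rw [← Finset.mul_sum, Finset.sum_add_distrib, ← hκ] at hB
  have hA : 0 ≤ ∑ j, ∫ p, ‖gradient (fun x => g j (x, p.2)) p.1‖ ^ 2 * gibbsWeight f β p :=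
    Finset.sum_nonneg fun j _ => integral_nonneg fun p =>
      mul_nonneg (sq_nonneg _) (Real.exp_pos _).le
  rw [Finset.sum_add_distrib, mul_assoc (2 * C ^ 2)]
  refine mul_le_mul_of_nonneg_left ?_ (by positivity)
  linarith
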